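/- There holds the cancellation identity ∫_ℝ [ p(p−1) w(x)^{p−2} w'(x) w₁(x) w₂(x) + w₂'(x) w'(x) + σ^{−1} x w₂(x) w'(x) + w₁(x) w'(x) ] dx = −∫_ℝ w'(x)² dx. -/

import Mathlib

open Real

/-! Write `L = -∂² + 1 - p w^(p-1)` for the linearization of the equation of `w`. Then `L w₂ = w`,
and differentiating this relation gives `L w₂' = w' + p (p-1) w^(p-2) w' w₂`, so the first and last
terms of the integrand add up to `w₁ L w₂'`. Since `L` is symmetric, they contribute
`∫ w₂' L w₁ = ∫ w₂' (w' + σ⁻¹ x w)`, and the whole integral becomes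
`2 ∫ w₂' w' + σ⁻¹ ∫ x (w w₂)' = 2 ∫ w₂' w' - σ⁻¹ ∫ w w₂`. Integrating by parts, both integrals are
multiples of `∫ w'²` and `∫ w²`, and these two are proportional by the Pohozaev identity. -/

open Asymptotics Filter MeasureTheory Topology
open scoped ContDiff

/-- Exponential decay at infinity, at some positive rate. Nothing is required on compact sets, so
integrability additionally needs local regularity. -/
def HasExpDecay {E F : Type*} [NormedAddCommGroup E] [Norm F] (f : E → F) : Prop :=
  ∃ b > 0, f =O[cocompact E] fun x => exp (-b * ‖x‖)

theorem isBigO_one_of_forall_norm_le {α F : Type*} [Norm F] {f : α → F} {M : ℝ} (l : Filter α)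
    (hf : ∀ x, ‖f x‖ ≤ M) : f =O[l] fun _ => (1 : ℝ) :=
  .of_bound M (.of_forall fun x => by simpa using hf x)

theorem isBigO_exp_neg_mul_norm {E : Type*} [SeminormedAddCommGroup E] {b c : ℝ} (hbc : b ≤ c)
    (l : Filter E) : (fun x : E => exp (-c * ‖x‖)) =O[l] fun x => exp (-b * ‖x‖) :=
  .of_norm_le fun x => by
    rw [norm_of_nonneg (exp_pos _).le]
    gcongr

theorem isBigO_id_exp_mul_norm {b : ℝ} (hb : 0 < b) :
    (fun x : ℝ => x) =O[cocompact ℝ] fun x => exp (b * ‖x‖) := by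
  have h := (isLittleO_pow_exp_pos_mul_atTop 1 hb).isBigO.comp_tendsto
    (tendsto_norm_cocompact_atTop (E := ℝ))
  exact (h.congr_left fun x => pow_one ‖x‖).of_norm_left

theorem integrable_exp_neg_mul_norm {b : ℝ} (hb : 0 < b) :
    Integrable fun x : ℝ => exp (-b * ‖x‖) := by
  have hcont : Continuous fun x : ℝ => exp (-b * ‖x‖) := by fun_prop
  refine hcont.locallyIntegrable.integrable_of_isBigO_atTop_of_norm_isNegInvariant
    (g := fun x => exp (-b * x)) (.of_forall fun x => by simp) ?_ ⟨Set.Ioi 0, Ioi_mem_atTop 0, ?_⟩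
  · refine EventuallyEq.isBigO ?_
    filter_upwards [eventually_ge_atTop 0] with x hx
    rw [norm_of_nonneg hx]
  · exact exp_neg_integrableOn_Ioi 0 hb

namespace HasExpDecay

theorem congr {E F : Type*} [NormedAddCommGroup E] [Norm F] {f g : E → F} (hf : HasExpDecay f)
    (hfg : ∀ x, f x = g x) : HasExpDecay g :=
  funext hfg ▸ hf

section NormedGroup

variable {E F : Type*} [NormedAddCommGroup E] [SeminormedAddCommGroup F] {f g : E → F}

theorem neg (hf : HasExpDecay f) : HasExpDecay fun x => -f x :=
  hf.imp fun _ ⟨hb, h⟩ => ⟨hb, h.neg_left⟩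

theorem add (hf : HasExpDecay f) (hg : HasExpDecay g) : HasExpDecay fun x => f x + g x := by
  obtain ⟨b, hb, hf⟩ := hf
  obtain ⟨c, hc, hg⟩ := hg
  exact ⟨min b c, lt_min hb hc,
    (hf.trans (isBigO_exp_neg_mul_norm (min_le_left b c) _)).add
      (hg.trans (isBigO_exp_neg_mul_norm (min_le_right b c) _))⟩

theorem sub (hf : HasExpDecay f) (hg : HasExpDecay g) : HasExpDecay fun x => f x - g x := by
  simpa only [sub_eq_add_neg] using hf.add hg.neg

theorem isBigO_one (hf : HasExpDecay f) : f =O[cocompact E] fun _ => (1 : ℝ) := by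
  obtain ⟨b, hb, hf⟩ := hf
  simpa using hf.trans (isBigO_exp_neg_mul_norm hb.le _)

end NormedGroup

section NormedRing

variable {E R : Type*} [NormedAddCommGroup E] [SeminormedRing R] {f g : E → R}

theorem bdd_mul (hg : g =O[cocompact E] fun _ => (1 : ℝ)) (hf : HasExpDecay f) :
    HasExpDecay fun x => g x * f x := by
  obtain ⟨b, hb, hf⟩ := hf
  exact ⟨b, hb, by simpa only [one_mul] using hg.mul hf⟩

theorem mul (hf : HasExpDecay f) (hg : HasExpDecay g) : HasExpDecay fun x => f x * g x :=
  bdd_mul hf.isBigO_one hg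

theorem sq (hf : HasExpDecay f) : HasExpDecay fun x => f x ^ 2 := by
  simpa only [pow_two] using hf.mul hf

theorem const_mul (c : R) (hf : HasExpDecay f) : HasExpDecay fun x => c * f x :=
  bdd_mul (isBigO_const_const c one_ne_zero _) hf

end NormedRing

theorem rpow {E : Type*} [NormedAddCommGroup E] {f : E → ℝ} (hf : HasExpDecay f) {q : ℝ}
    (hq : 0 < q) : HasExpDecay fun x => f x ^ q := by
  obtain ⟨b, hb, hf⟩ := hf
  refine ⟨b * q, mul_pos hb hq, (hf.rpow hq.le (.of_forall fun x => (exp_pos _).le)).congr_right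
    fun x => ?_⟩
  rw [← exp_mul]
  ring_nf

theorem id_mul {f : ℝ → ℝ} (hf : HasExpDecay f) : HasExpDecay fun x => x * f x := by
  obtain ⟨b, hb, hf⟩ := hf
  refine ⟨b / 2, half_pos hb,
    ((isBigO_id_exp_mul_norm (half_pos hb)).mul hf).congr_right fun x => ?_⟩
  rw [← exp_add]
  ring_nf

theorem tendsto_zero {E F : Type*} [NormedAddCommGroup E] [ProperSpace E] [NormedAddCommGroup F]
    {f : E → F} (hf : HasExpDecay f) : Tendsto f (cocompact E) (𝓝 0) := by
  obtain ⟨b, hb, hf⟩ := hf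
  refine hf.trans_tendsto (tendsto_exp_atBot.comp ?_)
  exact tendsto_norm_cocompact_atTop.const_mul_atTop_of_neg (neg_lt_zero.2 hb)

theorem integrable {F : Type*} [NormedAddCommGroup F] {f : ℝ → F} (hf : HasExpDecay f)
    (hcont : Continuous f) : Integrable f := by
  obtain ⟨b, hb, hf⟩ := hf
  exact hcont.locallyIntegrable.integrable_of_isBigO_cocompact hf
    ((integrable_exp_neg_mul_norm hb).integrableAtFilter _)

section IntegrationByParts

variable {h h' : ℝ → ℝ} (hderiv : ∀ x, HasDerivAt h (h' x) x) (hcont' : Continuous h')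
  (hh : HasExpDecay h) (hh' : HasExpDecay h')

include hderiv hcont' hh hh'

theorem integral_deriv_eq_zero : ∫ x, h' x = 0 :=
  integral_eq_zero_of_hasDerivAt_of_integrable hderiv (hh'.integrable hcont')
    (hh.integrable (continuous_iff_continuousAt.2 fun x => (hderiv x).continuousAt))

theorem integral_id_mul_deriv : ∫ x, x * h' x = -∫ x, h x := by
  have hcont : Continuous h := continuous_iff_continuousAt.2 fun x => (hderiv x).continuousAt
  have hint : Integrable h := hh.integrable hcont
  have hint_id : Integrable fun x => x * h x := hh.id_mul.integrable (by fun_prop)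
  have hint_id' : Integrable fun x => x * h' x := hh'.id_mul.integrable (by fun_prop)
  simpa using integral_mul_deriv_eq_deriv_mul_of_integrable (u := fun x : ℝ => x)
    (u' := fun _ => 1) (fun x _ => hasDerivAt_id x) (fun x _ => hderiv x) hint_id'
    (by simpa [Pi.mul_def] using hint) hint_id

theorem integral_id_mul_mul_deriv : ∫ x, x * (h x * h' x) = -(1 / 2) * ∫ x, h x ^ 2 := by
  have hcont : Continuous h := continuous_iff_continuousAt.2 fun x => (hderiv x).continuousAt
  have hparts := integral_id_mul_deriv (h := fun x => h x ^ 2) (h' := fun x => 2 * (h x * h' x))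
    (fun x => ((hderiv x).pow 2).congr_deriv (by ring)) (by fun_prop) (hh.sq)
    ((hh.mul hh').const_mul 2)
  simp only [mul_left_comm _ (2 : ℝ), integral_const_mul] at hparts
  linarith

end IntegrationByParts

end HasExpDecay

/-- The one-dimensional Schrödinger operator `-∂² + V`, acting on functions. It is meaningful on
twice differentiable functions only, since `deriv` is `0` where the derivative does not exist. -/
noncomputable def schrodingerOp (V φ : ℝ → ℝ) (x : ℝ) : ℝ :=
  -deriv (deriv φ) x + V x * φ x

section SchrodingerOp

variable {V φ ψ : ℝ → ℝ}

theorem continuous_schrodingerOp (hV : Continuous V) (hφ : ContDiff ℝ 2 φ) :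
    Continuous (schrodingerOp V φ) :=
  (hφ.deriv'.continuous_deriv_one.neg).add (hV.mul hφ.continuous)

theorem hasDerivAt_wronskian (hφ : ContDiff ℝ 2 φ) (hψ : ContDiff ℝ 2 ψ) (x : ℝ) :
    HasDerivAt (fun x => φ x * deriv ψ x - deriv φ x * ψ x)
      (schrodingerOp V φ x * ψ x - φ x * schrodingerOp V ψ x) x := by
  have hasDerivAt_deriv {f : ℝ → ℝ} (hf : ContDiff ℝ 2 f) :
      HasDerivAt f (deriv f x) x ∧ HasDerivAt (deriv f) (deriv (deriv f) x) x :=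
    ⟨(hf.differentiable two_ne_zero x).hasDerivAt,
      (hf.deriv'.differentiable_one x).hasDerivAt⟩
  obtain ⟨dφ, dφ'⟩ := hasDerivAt_deriv hφ
  obtain ⟨dψ, dψ'⟩ := hasDerivAt_deriv hψ
  refine ((dφ.mul dψ').sub (dφ'.mul dψ)).congr_deriv ?_
  simp only [schrodingerOp]
  ring

theorem integral_mul_schrodingerOp_comm (hV : Continuous V)
    (hφ : ContDiff ℝ 2 φ) (hψ : ContDiff ℝ 2 ψ)
    (bdd_φ : φ =O[cocompact ℝ] fun _ => (1 : ℝ))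
    (bdd_φ' : deriv φ =O[cocompact ℝ] fun _ => (1 : ℝ))
    (bdd_Lφ : schrodingerOp V φ =O[cocompact ℝ] fun _ => (1 : ℝ))
    (decay_ψ : HasExpDecay ψ) (decay_ψ' : HasExpDecay (deriv ψ))
    (decay_Lψ : HasExpDecay (schrodingerOp V ψ)) :
    ∫ x, φ x * schrodingerOp V ψ x = ∫ x, schrodingerOp V φ x * ψ x := by
  have decay_left := decay_Lψ.bdd_mul bdd_φ
  have decay_right := decay_ψ.bdd_mul bdd_Lφ
  have cont_left := hφ.continuous.mul (continuous_schrodingerOp hV hψ)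
  have cont_right := (continuous_schrodingerOp hV hφ).mul hψ.continuous
  have hzero := HasExpDecay.integral_deriv_eq_zero (hasDerivAt_wronskian (V := V) hφ hψ)
    (cont_right.sub cont_left) ((decay_ψ'.bdd_mul bdd_φ).sub (decay_ψ.bdd_mul bdd_φ'))
    (decay_right.sub decay_left)
  rw [integral_sub (decay_right.integrable cont_right) (decay_left.integrable cont_left)] at hzero
  exact (sub_eq_zero.1 hzero).symm

theorem schrodingerOp_deriv {V' : ℝ} {x : ℝ} (hV : HasDerivAt V V' x) (hφ : ContDiff ℝ 3 φ) :
    schrodingerOp V (deriv φ) x = deriv (schrodingerOp V φ) x - V' * φ x := by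
  have hφ' : ContDiff ℝ 2 (deriv φ) := hφ.deriv'
  have dφ := (hφ.differentiable three_ne_zero x).hasDerivAt
  have dφ'' := (hφ'.deriv'.differentiable_one x).hasDerivAt
  have dLφ : HasDerivAt (schrodingerOp V φ)
      (-deriv (deriv (deriv φ)) x + (V' * φ x + V x * deriv φ x)) x := dφ''.neg.add (hV.mul dφ)
  rw [dLφ.deriv, schrodingerOp]
  ring

end SchrodingerOp

/-- A positive solution of `w'' - w + w ^ p = 0` on the line that decays exponentially together
with its derivative. -/
structure IsGroundState (p : ℝ) (w : ℝ → ℝ) : Prop where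
  pos : ∀ x, 0 < w x
  contDiff_two : ContDiff ℝ 2 w
  ode : ∀ x, deriv (deriv w) x - w x + w x ^ p = 0
  decay : HasExpDecay w
  decay_deriv : HasExpDecay (deriv w)

/-- The potential `1 - p w^(p-1)` of the linearization of `-w'' + w - w^p` at `w`. -/
noncomputable def linearizedPotential (p : ℝ) (w : ℝ → ℝ) (x : ℝ) : ℝ :=
  1 - p * w x ^ (p - 1)

/-- Minus the derivative at `μ = 1` of `x ↦ μ ^ (1 / (p - 1)) * w (√μ * x)`, the rescaling of `w`
that solves `u'' - μ u + u ^ p = 0`. -/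
noncomputable def scalingMode (p : ℝ) (w : ℝ → ℝ) (x : ℝ) : ℝ :=
  -(w x) / (p - 1) - (1 / 2) * x * deriv w x

namespace IsGroundState

variable {p : ℝ} {w : ℝ → ℝ}

theorem of_add_abs_deriv_le {C a : ℝ} (hpos : ∀ x, 0 < w x) (hsmooth : ContDiff ℝ 2 w)
    (hode : ∀ x, deriv (deriv w) x - w x + w x ^ p = 0)
    (ha : 0 < a) (hle : ∀ x, w x + |deriv w x| ≤ C * exp (-a * |x|)) : IsGroundState p w := by
  refine ⟨hpos, hsmooth, hode, ⟨a, ha, .of_bound C (.of_forall fun x => ?_)⟩,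
    ⟨a, ha, .of_bound C (.of_forall fun x => ?_)⟩⟩ <;>
  rw [norm_of_nonneg (exp_pos _).le, norm_eq_abs, norm_eq_abs]
  · rw [abs_of_pos (hpos x)]
    linarith [hle x, abs_nonneg (deriv w x)]
  · linarith [hle x, hpos x]

theorem deriv_deriv (hw : IsGroundState p w) (x : ℝ) : deriv (deriv w) x = w x - w x ^ p := by
  linarith [hw.ode x]

theorem contDiff (hw : IsGroundState p w) : ContDiff ℝ ∞ w := by
  have bootstrap (n : ℕ) : ContDiff ℝ (n + 2) w := by
    induction n with
    | zero => simpa using hw.contDiff_two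
    | succ n ih =>
      have hw'' : ContDiff ℝ (n + 1) (deriv (deriv w)) := by
        rw [funext hw.deriv_deriv]
        have hn : ContDiff ℝ (n + 1) w := ih.of_le (by gcongr; exact one_le_two)
        exact hn.sub (hn.rpow_const_of_ne fun x => (hw.pos x).ne')
      have hw' : ContDiff ℝ (n + 1 + 1) (deriv w) :=
        contDiff_succ_iff_deriv.2 ⟨hw.contDiff_two.differentiable_deriv_two, by simp, hw''⟩
      have hw_succ : ContDiff ℝ (n + 1 + 1 + 1) w :=
        contDiff_succ_iff_deriv.2 ⟨hw.contDiff_two.differentiable two_ne_zero, by simp, hw'⟩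
      exact_mod_cast hw_succ
  exact contDiff_infty.2 fun n => (bootstrap n).of_le le_self_add

theorem contDiff_deriv (hw : IsGroundState p w) : ContDiff ℝ ∞ (deriv w) :=
  (contDiff_infty_iff_deriv.1 hw.contDiff).2

theorem continuous (hw : IsGroundState p w) : Continuous w :=
  hw.contDiff_two.continuous

theorem continuous_deriv (hw : IsGroundState p w) : Continuous (deriv w) :=
  hw.contDiff_two.continuous_deriv one_le_two

theorem continuous_rpow (hw : IsGroundState p w) (q : ℝ) : Continuous fun x => w x ^ q :=
  hw.continuous.rpow_const fun x => .inl (hw.pos x).ne'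

theorem hasDerivAt (hw : IsGroundState p w) (x : ℝ) : HasDerivAt w (deriv w x) x :=
  (hw.contDiff_two.differentiable two_ne_zero x).hasDerivAt

theorem hasDerivAt_deriv (hw : IsGroundState p w) (x : ℝ) :
    HasDerivAt (deriv w) (w x - w x ^ p) x :=
  hw.deriv_deriv x ▸ (hw.contDiff_two.deriv'.differentiable_one x).hasDerivAt

theorem hasDerivAt_rpow (hw : IsGroundState p w) (q x : ℝ) :
    HasDerivAt (fun x => w x ^ q) (q * w x ^ (q - 1) * deriv w x) x :=
  ((hw.hasDerivAt x).rpow_const (.inl (hw.pos x).ne')).congr_deriv (by ring)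

theorem rpow_add_one (hw : IsGroundState p w) (q x : ℝ) : w x ^ (q + 1) = w x ^ q * w x :=
  Real.rpow_add_one (hw.pos x).ne' q

theorem sq_deriv_eq (hw : IsGroundState p w) (hp : -1 < p) (x : ℝ) :
    deriv w x ^ 2 = w x ^ 2 - 2 / (p + 1) * w x ^ (p + 1) := by
  set energy : ℝ → ℝ := fun x => deriv w x * deriv w x - w x * w x + 2 / (p + 1) * w x ^ (p + 1)
  have hp1 : 0 < p + 1 := by linarith
  have denergy (x : ℝ) : HasDerivAt energy 0 x := by
    refine ((((hw.hasDerivAt_deriv x).mul (hw.hasDerivAt_deriv x)).sub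
      ((hw.hasDerivAt x).mul (hw.hasDerivAt x))).add
      ((hw.hasDerivAt_rpow (p + 1) x).const_mul _)).congr_deriv ?_
    rw [add_sub_cancel_right]
    field_simp
    ring
  have energy_const : energy = fun _ => energy x := funext fun y =>
    is_const_of_deriv_eq_zero (fun y => (denergy y).differentiableAt)
      (fun y => (denergy y).deriv) y x
  have energy_tendsto : Tendsto energy (cocompact ℝ) (𝓝 0) :=
    (((hw.decay_deriv.mul hw.decay_deriv).sub (hw.decay.mul hw.decay)).add
      ((hw.decay.rpow hp1).const_mul _)).tendsto_zero
  rw [energy_const] at energy_tendsto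
  have energy_zero : energy x = 0 := tendsto_const_nhds_iff.1 energy_tendsto
  linarith [energy_zero]

theorem abs_deriv_le (hw : IsGroundState p w) (hp : -1 < p) (x : ℝ) : |deriv w x| ≤ w x := by
  have hnonneg : 0 ≤ 2 / (p + 1) * w x ^ (p + 1) :=
    mul_nonneg (div_nonneg zero_le_two (by linarith)) (rpow_nonneg (hw.pos x).le _)
  exact abs_le_of_sq_le_sq (by linarith [hw.sq_deriv_eq hp x]) (hw.pos x).le

theorem integrable_sq (hw : IsGroundState p w) : Integrable fun x => w x ^ 2 :=
  hw.decay.sq.integrable (hw.continuous.pow 2)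

theorem integrable_sq_deriv (hw : IsGroundState p w) : Integrable fun x => deriv w x ^ 2 :=
  hw.decay_deriv.sq.integrable (hw.continuous_deriv.pow 2)

theorem pohozaev (hw : IsGroundState p w) (hp : -1 < p) :
    (p + 3) * ∫ x, deriv w x ^ 2 = (p - 1) * ∫ x, w x ^ 2 := by
  have hderiv (x : ℝ) : HasDerivAt (fun x => 2 * (w x * deriv w x))
      ((p + 3) * deriv w x ^ 2 - (p - 1) * w x ^ 2) x := by
    refine (((hw.hasDerivAt x).mul (hw.hasDerivAt_deriv x)).const_mul 2).congr_deriv ?_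
    have hpow : w x ^ p * w x = (p + 1) / 2 * (w x ^ 2 - deriv w x ^ 2) := by
      rw [← hw.rpow_add_one, hw.sq_deriv_eq hp]
      field_simp [show p + 1 ≠ 0 by linarith]
      ring
    linear_combination -2 * hpow
  have hcont : Continuous fun x => (p + 3) * deriv w x ^ 2 - (p - 1) * w x ^ 2 :=
    ((hw.continuous_deriv.pow 2).const_mul _).sub ((hw.continuous.pow 2).const_mul _)
  have hzero := HasExpDecay.integral_deriv_eq_zero hderiv hcont
    ((hw.decay.mul hw.decay_deriv).const_mul 2)
    ((hw.decay_deriv.sq.const_mul _).sub (hw.decay.sq.const_mul _))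
  rw [integral_sub (hw.integrable_sq_deriv.const_mul _) (hw.integrable_sq.const_mul _),
    integral_const_mul, integral_const_mul] at hzero
  exact sub_eq_zero.1 hzero

theorem continuous_linearizedPotential (hw : IsGroundState p w) :
    Continuous (linearizedPotential p w) :=
  continuous_const.sub (continuous_const.mul (hw.continuous_rpow (p - 1)))

theorem hasDerivAt_linearizedPotential (hw : IsGroundState p w) (x : ℝ) :
    HasDerivAt (linearizedPotential p w) (-(p * (p - 1) * w x ^ (p - 2) * deriv w x)) x := by
  refine (((hw.hasDerivAt_rpow (p - 1) x).const_mul p).const_sub 1).congr_deriv ?_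
  rw [show p - 1 - 1 = p - 2 by ring]
  ring

theorem contDiff_scalingMode (hw : IsGroundState p w) : ContDiff ℝ ∞ (scalingMode p w) := by
  have := hw.contDiff
  have := hw.contDiff_deriv
  unfold scalingMode
  fun_prop

theorem hasDerivAt_scalingMode (hw : IsGroundState p w) (x : ℝ) :
    HasDerivAt (scalingMode p w)
      (-(1 / (p - 1) + 1 / 2) * deriv w x - 1 / 2 * (x * (w x - w x ^ p))) x := by
  refine (((hw.hasDerivAt x).neg.div_const (p - 1)).sub
    (((hasDerivAt_id x).const_mul (1 / 2)).mul (hw.hasDerivAt_deriv x))).congr_deriv ?_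
  simp only [id]
  ring

theorem schrodingerOp_scalingMode (hw : IsGroundState p w) (hp : p ≠ 1) :
    schrodingerOp (linearizedPotential p w) (scalingMode p w) = w := by
  funext x
  have hp1 : p - 1 ≠ 0 := sub_ne_zero.2 hp
  have dw₂' : HasDerivAt (deriv (scalingMode p w))
      (-(1 / (p - 1) + 1 / 2) * (w x - w x ^ p) - 1 / 2 * ((w x - w x ^ p)
        + x * (deriv w x - p * w x ^ (p - 1) * deriv w x))) x := by
    rw [funext fun x => (hw.hasDerivAt_scalingMode x).deriv]
    refine (((hw.hasDerivAt_deriv x).const_mul _).sub (((hasDerivAt_id x).mul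
      ((hw.hasDerivAt x).sub (hw.hasDerivAt_rpow p x))).const_mul _)).congr_deriv ?_
    simp only [id, one_mul, Pi.sub_apply]
  have hpow : w x ^ p = w x ^ (p - 1) * w x := by rw [← hw.rpow_add_one, sub_add_cancel]
  rw [schrodingerOp, dw₂'.deriv, linearizedPotential, scalingMode, hpow]
  field_simp
  ring

theorem contDiff_deriv_scalingMode (hw : IsGroundState p w) :
    ContDiff ℝ ∞ (deriv (scalingMode p w)) :=
  (contDiff_infty_iff_deriv.1 hw.contDiff_scalingMode).2

theorem decay_sub_rpow (hw : IsGroundState p w) (hp : 0 < p) :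
    HasExpDecay fun x => w x - w x ^ p :=
  hw.decay.sub (hw.decay.rpow hp)

theorem decay_scalingMode (hw : IsGroundState p w) : HasExpDecay (scalingMode p w) := by
  refine ((hw.decay.const_mul (-1 / (p - 1))).sub (hw.decay_deriv.id_mul.const_mul (1 / 2))).congr
    fun x => ?_
  rw [scalingMode]
  ring

theorem decay_deriv_scalingMode (hw : IsGroundState p w) (hp : 0 < p) :
    HasExpDecay (deriv (scalingMode p w)) := by
  rw [funext fun x => (hw.hasDerivAt_scalingMode x).deriv]
  exact (hw.decay_deriv.const_mul _).sub ((hw.decay_sub_rpow hp).id_mul.const_mul _)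

theorem decay_deriv_deriv_scalingMode (hw : IsGroundState p w) (hp : 1 < p) :
    HasExpDecay (deriv (deriv (scalingMode p w))) := by
  have hL (x : ℝ) : deriv (deriv (scalingMode p w)) x
      = scalingMode p w x - p * (w x ^ (p - 1) * scalingMode p w x) - w x := by
    have := congrFun (hw.schrodingerOp_scalingMode hp.ne') x
    rw [schrodingerOp, linearizedPotential] at this
    linear_combination -this
  rw [funext hL]
  exact (hw.decay_scalingMode.sub
    (((hw.decay.rpow (sub_pos.2 hp)).mul hw.decay_scalingMode).const_mul p)).sub hw.decay

theorem schrodingerOp_deriv_scalingMode (hw : IsGroundState p w) (hp : p ≠ 1) (x : ℝ) :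
    schrodingerOp (linearizedPotential p w) (deriv (scalingMode p w)) x
      = deriv w x + p * (p - 1) * w x ^ (p - 2) * deriv w x * scalingMode p w x := by
  rw [schrodingerOp_deriv (hw.hasDerivAt_linearizedPotential x)
    (contDiff_infty.1 hw.contDiff_scalingMode 3), hw.schrodingerOp_scalingMode hp]
  ring

theorem decay_rpow_mul_deriv (hw : IsGroundState p w) (hp : 1 < p) :
    HasExpDecay fun x => w x ^ (p - 2) * deriv w x := by
  obtain ⟨b, hb, hdecay⟩ := hw.decay.rpow (sub_pos.2 hp)
  -- For `p < 2` the factor `w ^ (p - 2)` is unbounded; `|w'| ≤ w` compensates for it.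
  refine ⟨b, hb, .trans (.of_norm_le fun x => ?_) hdecay⟩
  have hpow : 0 ≤ w x ^ (p - 2) := rpow_nonneg (hw.pos x).le _
  calc ‖w x ^ (p - 2) * deriv w x‖ = w x ^ (p - 2) * |deriv w x| := by
        rw [norm_mul, norm_of_nonneg hpow, norm_eq_abs]
    _ ≤ w x ^ (p - 2) * w x := by gcongr; exact hw.abs_deriv_le (by linarith) x
    _ = w x ^ (p - 1) := by rw [← hw.rpow_add_one]; ring_nf

theorem decay_schrodingerOp_deriv_scalingMode (hw : IsGroundState p w) (hp : 1 < p) :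
    HasExpDecay (schrodingerOp (linearizedPotential p w) (deriv (scalingMode p w))) := by
  refine (hw.decay_deriv.add
    (((hw.decay_rpow_mul_deriv hp).mul hw.decay_scalingMode).const_mul (p * (p - 1)))).congr
    fun x => ?_
  rw [hw.schrodingerOp_deriv_scalingMode hp.ne']
  ring

theorem integral_mul_scalingMode (hw : IsGroundState p w) :
    ∫ x, w x * scalingMode p w x = (1 / 4 - 1 / (p - 1)) * ∫ x, w x ^ 2 := by
  have hint : Integrable fun x => x * (w x * deriv w x) :=
    (hw.decay.mul hw.decay_deriv).id_mul.integrable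
      (continuous_id.mul (hw.continuous.mul hw.continuous_deriv))
  calc ∫ x, w x * scalingMode p w x
      = ∫ x, (-1 / (p - 1) * w x ^ 2 - 1 / 2 * (x * (w x * deriv w x))) := by
        congr with x; rw [scalingMode]; ring
    _ = -1 / (p - 1) * (∫ x, w x ^ 2) - 1 / 2 * ∫ x, x * (w x * deriv w x) := by
        rw [integral_sub (hw.integrable_sq.const_mul _) (hint.const_mul _), integral_const_mul,
          integral_const_mul]
    _ = (1 / 4 - 1 / (p - 1)) * ∫ x, w x ^ 2 := by
        rw [HasExpDecay.integral_id_mul_mul_deriv hw.hasDerivAt hw.continuous_deriv hw.decay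
          hw.decay_deriv]
        ring

theorem integral_deriv_scalingMode_mul_deriv (hw : IsGroundState p w) (hp : 0 < p) :
    ∫ x, deriv (scalingMode p w) x * deriv w x
      = -(1 / 4 + 1 / (p - 1)) * ∫ x, deriv w x ^ 2 := by
  have hcont : Continuous fun x => w x - w x ^ p := hw.continuous.sub (hw.continuous_rpow p)
  have hdecay := hw.decay_sub_rpow hp
  have hint : Integrable fun x => x * (deriv w x * (w x - w x ^ p)) :=
    (hw.decay_deriv.mul hdecay).id_mul.integrable
      (continuous_id.mul (hw.continuous_deriv.mul hcont))
  calc ∫ x, deriv (scalingMode p w) x * deriv w x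
      = ∫ x, (-(1 / (p - 1) + 1 / 2) * deriv w x ^ 2
          - 1 / 2 * (x * (deriv w x * (w x - w x ^ p)))) := by
        congr with x; rw [(hw.hasDerivAt_scalingMode x).deriv]; ring
    _ = -(1 / (p - 1) + 1 / 2) * (∫ x, deriv w x ^ 2)
          - 1 / 2 * ∫ x, x * (deriv w x * (w x - w x ^ p)) := by
        rw [integral_sub (hw.integrable_sq_deriv.const_mul _) (hint.const_mul _),
          integral_const_mul, integral_const_mul]
    _ = -(1 / 4 + 1 / (p - 1)) * ∫ x, deriv w x ^ 2 := by
        rw [HasExpDecay.integral_id_mul_mul_deriv hw.hasDerivAt_deriv hcont hw.decay_deriv hdecay]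
        ring

theorem integral_id_mul_deriv_mul_scalingMode (hw : IsGroundState p w) (hp : 0 < p) :
    ∫ x, x * (deriv w x * scalingMode p w x + w x * deriv (scalingMode p w) x)
      = -∫ x, w x * scalingMode p w x :=
  HasExpDecay.integral_id_mul_deriv
    (fun x => (hw.hasDerivAt x).mul (hw.hasDerivAt_scalingMode x).differentiableAt.hasDerivAt)
    ((hw.continuous_deriv.mul hw.contDiff_scalingMode.continuous).add
      (hw.continuous.mul hw.contDiff_deriv_scalingMode.continuous))
    (hw.decay.mul hw.decay_scalingMode)
    ((hw.decay_deriv.mul hw.decay_scalingMode).add (hw.decay.mul (hw.decay_deriv_scalingMode hp)))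

theorem two_mul_integral_sub_inv_mul_integral_scalingMode (hw : IsGroundState p w) (hp : 1 < p) :
    2 * (∫ x, deriv (scalingMode p w) x * deriv w x)
        - ((p + 1) / (p - 1) - 1 / 2)⁻¹ * ∫ x, w x * scalingMode p w x
      = -∫ x, deriv w x ^ 2 := by
  have hp1 : p - 1 ≠ 0 := (sub_pos.2 hp).ne'
  have hp3 : p + 3 ≠ 0 := by linarith
  have hinv : ((p + 1) / (p - 1) - 1 / 2)⁻¹ = 2 * (p - 1) / (p + 3) := by
    rw [← inv_div (p + 3)]
    congr 1
    field_simp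
    ring
  have hratio : ∫ x, deriv w x ^ 2 = (p - 1) / (p + 3) * ∫ x, w x ^ 2 := by
    rw [div_mul_eq_mul_div, eq_div_iff hp3, mul_comm]
    exact hw.pohozaev (by linarith)
  rw [hw.integral_deriv_scalingMode_mul_deriv (by linarith), hw.integral_mul_scalingMode, hratio,
    hinv]
  field_simp
  ring

theorem integral_mul_schrodingerOp_deriv_scalingMode (hw : IsGroundState p w) (hp : 1 < p)
    {φ : ℝ → ℝ} (hφ : ContDiff ℝ 2 φ) (bdd_φ : φ =O[cocompact ℝ] fun _ => (1 : ℝ))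
    (bdd_φ' : deriv φ =O[cocompact ℝ] fun _ => (1 : ℝ))
    (bdd_Lφ : schrodingerOp (linearizedPotential p w) φ =O[cocompact ℝ] fun _ => (1 : ℝ)) :
    ∫ x, φ x * schrodingerOp (linearizedPotential p w) (deriv (scalingMode p w)) x
      = ∫ x, schrodingerOp (linearizedPotential p w) φ x * deriv (scalingMode p w) x :=
  integral_mul_schrodingerOp_comm hw.continuous_linearizedPotential hφ
    (contDiff_infty.1 hw.contDiff_deriv_scalingMode 2) bdd_φ bdd_φ' bdd_Lφ
    (hw.decay_deriv_scalingMode (by linarith)) (hw.decay_deriv_deriv_scalingMode hp)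
    (hw.decay_schrodingerOp_deriv_scalingMode hp)

theorem integrable_mul_schrodingerOp_deriv_scalingMode (hw : IsGroundState p w) (hp : 1 < p)
    {φ : ℝ → ℝ} (hφ : Continuous φ) (bdd_φ : φ =O[cocompact ℝ] fun _ => (1 : ℝ)) :
    Integrable fun x =>
      φ x * schrodingerOp (linearizedPotential p w) (deriv (scalingMode p w)) x :=
  ((hw.decay_schrodingerOp_deriv_scalingMode hp).bdd_mul bdd_φ).integrable
    (hφ.mul (continuous_schrodingerOp hw.continuous_linearizedPotential
      (contDiff_infty.1 hw.contDiff_deriv_scalingMode 2)))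

theorem integrable_deriv_scalingMode_mul_deriv_add (hw : IsGroundState p w) (hp : 0 < p) (c : ℝ) :
    Integrable fun x =>
      deriv (scalingMode p w) x * deriv w x + c * (x * (scalingMode p w x * deriv w x)) := by
  have cont' := hw.continuous_deriv
  have cont₂ := hw.contDiff_scalingMode.continuous
  have cont₂' := hw.contDiff_deriv_scalingMode.continuous
  exact (((hw.decay_deriv_scalingMode hp).mul hw.decay_deriv).add
    ((hw.decay_scalingMode.mul hw.decay_deriv).id_mul.const_mul c)).integrable (by fun_prop)

theorem integral_source_mul_deriv_scalingMode_add (hw : IsGroundState p w) (hp : 0 < p) (c : ℝ) :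
    ∫ x, ((deriv w x + c * (x * w x)) * deriv (scalingMode p w) x
        + (deriv (scalingMode p w) x * deriv w x + c * (x * (scalingMode p w x * deriv w x))))
      = 2 * (∫ x, deriv (scalingMode p w) x * deriv w x)
        - c * ∫ x, w x * scalingMode p w x := by
  have decay' := hw.decay_deriv_scalingMode hp
  have cont := hw.continuous
  have cont' := hw.continuous_deriv
  have cont₂ := hw.contDiff_scalingMode.continuous
  have cont₂' := hw.contDiff_deriv_scalingMode.continuous
  have hint_deriv : Integrable fun x => deriv (scalingMode p w) x * deriv w x :=
    (decay'.mul hw.decay_deriv).integrable (by fun_prop)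
  have hint_id : Integrable fun x =>
      x * (deriv w x * scalingMode p w x + w x * deriv (scalingMode p w) x) :=
    ((hw.decay_deriv.mul hw.decay_scalingMode).add (hw.decay.mul decay')).id_mul.integrable
      (by fun_prop)
  calc _ = ∫ x, (2 * (deriv (scalingMode p w) x * deriv w x)
        + c * (x * (deriv w x * scalingMode p w x + w x * deriv (scalingMode p w) x))) := by
        congr with x; ring
    _ = 2 * (∫ x, deriv (scalingMode p w) x * deriv w x)
        - c * ∫ x, w x * scalingMode p w x := by
        rw [integral_add (hint_deriv.const_mul 2) (hint_id.const_mul c), integral_const_mul,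
          integral_const_mul, hw.integral_id_mul_deriv_mul_scalingMode hp]
        ring

theorem integral_mul_schrodingerOp_deriv_scalingMode_add (hw : IsGroundState p w) (hp : 1 < p)
    {φ : ℝ → ℝ} {c : ℝ} (hφ : ContDiff ℝ 2 φ) (bdd_φ : φ =O[cocompact ℝ] fun _ => (1 : ℝ))
    (bdd_φ' : deriv φ =O[cocompact ℝ] fun _ => (1 : ℝ))
    (hLφ : ∀ x, schrodingerOp (linearizedPotential p w) φ x = deriv w x + c * (x * w x)) :
    ∫ x, (φ x * schrodingerOp (linearizedPotential p w) (deriv (scalingMode p w)) x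
        + (deriv (scalingMode p w) x * deriv w x + c * (x * (scalingMode p w x * deriv w x))))
      = 2 * (∫ x, deriv (scalingMode p w) x * deriv w x)
        - c * ∫ x, w x * scalingMode p w x := by
  have hp0 : 0 < p := by linarith
  have decay_Lφ : HasExpDecay (schrodingerOp (linearizedPotential p w) φ) :=
    (hw.decay_deriv.add (hw.decay.id_mul.const_mul c)).congr fun x => (hLφ x).symm
  have hint_symm := (decay_Lφ.mul (hw.decay_deriv_scalingMode hp0)).integrable
    ((continuous_schrodingerOp hw.continuous_linearizedPotential hφ).mul
      hw.contDiff_deriv_scalingMode.continuous)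
  have hint_rest := hw.integrable_deriv_scalingMode_mul_deriv_add hp0 c
  rw [integral_add (hw.integrable_mul_schrodingerOp_deriv_scalingMode hp hφ.continuous bdd_φ)
    hint_rest, hw.integral_mul_schrodingerOp_deriv_scalingMode hp hφ bdd_φ bdd_φ'
    decay_Lφ.isBigO_one, ← integral_add hint_symm hint_rest]
  simp only [hLφ]
  exact hw.integral_source_mul_deriv_scalingMode_add hp0 c

end IsGroundState

/-- The cancellation identity
`∫ [ p(p−1) w^(p−2) w' w₁ w₂ + w₂' w' + σ⁻¹ x w₂ w' + w₁ w' ] = −∫ (w')²`. -/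
theorem cancellation_identity
    (p : ℝ) (hp : 1 < p) (σ : ℝ) (hσ : σ = (p + 1) / (p - 1) - 1 / 2)
    (w : ℝ → ℝ)
    (hw_pos : ∀ x, 0 < w x)
    (hw_smooth : ContDiff ℝ 2 w)
    (hw_eq : ∀ x, deriv (deriv w) x - w x + w x ^ p = 0)
    (hdecay : ∃ C₀ > (0:ℝ), ∃ a > (0:ℝ),
      ∀ x : ℝ, w x + |deriv w x| ≤ C₀ * Real.exp (-a * |x|))
    (w₂ : ℝ → ℝ)
    (hw₂ : w₂ = fun x => -(w x) / (p - 1) - (1 / 2) * x * deriv w x)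
    (w₁ : ℝ → ℝ)
    (hw₁_smooth : ContDiff ℝ 2 w₁)
    (hw₁_bdd : ∃ M : ℝ, ∀ x : ℝ, |w₁ x| + |deriv w₁ x| ≤ M)
    (hw₁_eq : ∀ x : ℝ,
      -(deriv (deriv w₁) x) + w₁ x - p * w x ^ (p - 1) * w₁ x
        = deriv w x + σ⁻¹ * x * w x) :
    (∫ x : ℝ,
        (p * (p - 1) * w x ^ (p - 2) * deriv w x * w₁ x * w₂ x
          + deriv w₂ x * deriv w x
          + σ⁻¹ * x * w₂ x * deriv w x
          + w₁ x * deriv w x))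
      = -(∫ x : ℝ, (deriv w x) ^ 2) := by
  obtain ⟨C, -, a, ha, hle⟩ := hdecay
  obtain ⟨M, hM⟩ := hw₁_bdd
  have hw : IsGroundState p w := .of_add_abs_deriv_le hw_pos hw_smooth hw_eq ha hle
  obtain rfl : w₂ = scalingMode p w := hw₂
  have hLw₁ (x : ℝ) : schrodingerOp (linearizedPotential p w) w₁ x
      = deriv w x + σ⁻¹ * (x * w x) := by
    rw [schrodingerOp, linearizedPotential]
    linear_combination hw₁_eq x
  have bdd_w₁ : w₁ =O[cocompact ℝ] fun _ => (1 : ℝ) :=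
    isBigO_one_of_forall_norm_le _ fun x => le_of_add_le_of_nonneg_left (hM x) (abs_nonneg _)
  have bdd_w₁' : deriv w₁ =O[cocompact ℝ] fun _ => (1 : ℝ) :=
    isBigO_one_of_forall_norm_le _ fun x => le_of_add_le_of_nonneg_right (hM x) (abs_nonneg _)
  calc _ = ∫ x, (w₁ x * schrodingerOp (linearizedPotential p w) (deriv (scalingMode p w)) x
        + (deriv (scalingMode p w) x * deriv w x
          + σ⁻¹ * (x * (scalingMode p w x * deriv w x)))) := by
        congr with x
        rw [hw.schrodingerOp_deriv_scalingMode hp.ne']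
        ring
    _ = 2 * (∫ x, deriv (scalingMode p w) x * deriv w x)
        - σ⁻¹ * ∫ x, w x * scalingMode p w x :=
        hw.integral_mul_schrodingerOp_deriv_scalingMode_add hp hw₁_smooth bdd_w₁ bdd_w₁' hLw₁
    _ = -∫ x, deriv w x ^ 2 :=
        hσ ▸ hw.two_mul_integral_sub_inv_mul_integral_scalingMode hp
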